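/- Let λ and λ' be ordered weight vectors with λ1 > 1/2 and λ1' > 1/2. If λ1 ≥ λ1', (1−2λ2)·(λ3'+λ4') ≥ (1−2λ2')·(λ3+λ4), and (1−2λ2−2λ3)·λ4' ≥ (1−2λ2'−2λ3')·λ4, then ρ_BD(λ) can be transformed to ρ_BD(λ') by SLOCC. -/

import Mathlib

open Matrix Complex
open scoped Kronecker ComplexOrder

noncomputable section
namespace Paper

abbrev Q2 := Fin 2 × Fin 2
abbrev M4 := Matrix Q2 Q2 ℂ
abbrev M16 := Matrix (Q2 × Q2) (Q2 × Q2) ℂ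

/-- `1/√2` as a complex number. -/
def invSqrt2 : ℂ := ((Real.sqrt 2)⁻¹ : ℝ)

/-- The four Bell states `|Φ₁⟩,…,|Φ₄⟩` as vectors in `ℂ²⊗ℂ²`
(product basis indexed by `Fin 2 × Fin 2`). -/
def bell : Fin 4 → Q2 → ℂ :=
  ![fun p => !![invSqrt2, 0; 0, invSqrt2] p.1 p.2,
    fun p => !![invSqrt2, 0; 0, -invSqrt2] p.1 p.2,
    fun p => !![0, invSqrt2; invSqrt2, 0] p.1 p.2,
    fun p => !![0, invSqrt2; -invSqrt2, 0] p.1 p.2]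

/-- The Bell projectors `Π_i = |Φ_i⟩⟨Φ_i|`. -/
def BellProj (i : Fin 4) : M4 := vecMulVec (bell i) (star (bell i))

/-- The Pauli matrices `σ_x, σ_y, σ_z`. -/
def pauli : Fin 3 → Matrix (Fin 2) (Fin 2) ℂ :=
  ![!![0, 1; 1, 0], !![0, -I; I, 0], !![1, 0; 0, -1]]

/-- Reindexing `((a',b'),(a'',b'')) ↦ ((a',a''),(b',b''))`. -/
def swapMid : (Q2 × Q2) ≃ (Q2 × Q2) where
  toFun p := ((p.1.1, p.2.1), (p.1.2, p.2.2))
  invFun p := ((p.1.1, p.2.1), (p.1.2, p.2.2))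
  left_inv _ := rfl
  right_inv _ := rfl

/-- The rank-one matrix `x x†`. -/
def pureMat {d : Type*} (x : d → ℂ) : Matrix d d ℂ := vecMulVec x (star x)

/-- Separability of a 16×16 four-qubit matrix (qubit order A',B',A'',B'')
across the partition A = (A',A''), B = (B',B''). -/
def SepAB (ρ : M16) : Prop :=
  ∃ (n : ℕ) (x y : Fin n → Q2 → ℂ),
    (Matrix.reindex swapMid swapMid ρ) = ∑ k, (pureMat (x k)) ⊗ₖ (pureMat (y k))


/-- `ρ` can be transformed to `ρ'` by SLOCC: `ρ' = c·Σ_k (A_k⊗B_k) ρ (A_k⊗B_k)†`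
for finitely many local Kraus pairs and some `c > 0`. -/
def SLOCCto (ρ ρ' : M4) : Prop :=
  ∃ (N : ℕ) (A B : Fin N → Matrix (Fin 2) (Fin 2) ℂ) (c : ℝ),
    0 < c ∧ ρ' = (c : ℂ) • ∑ k, (A k ⊗ₖ B k) * ρ * (A k ⊗ₖ B k)ᴴ

/-- `ρ` and `ρ'` are SLOCC equivalent. -/
def SLOCCequiv (ρ ρ' : M4) : Prop := SLOCCto ρ ρ' ∧ SLOCCto ρ' ρ

/-- The Bell-diagonal state with weight vector `l`. -/
def rhoBD (l : Fin 4 → ℝ) : M4 := ∑ i, (l i : ℂ) • BellProj i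

/-- `l` is a weight vector: nonnegative entries summing to `1`. -/
def IsWeight (l : Fin 4 → ℝ) : Prop := (∀ i, 0 ≤ l i) ∧ ∑ i, l i = 1

/-- `l` is ordered: `λ₁ ≥ λ₂ ≥ λ₃ ≥ λ₄`. -/
def IsOrdered (l : Fin 4 → ℝ) : Prop := l 1 ≤ l 0 ∧ l 2 ≤ l 1 ∧ l 3 ≤ l 2

/-- A two-qubit density matrix. -/
def IsDensity (ρ : M4) : Prop := ρ.PosSemidef ∧ ρ.trace = 1

/-- Separability of a two-qubit matrix. -/
def Sep2 (ρ : M4) : Prop :=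
  ∃ (N : ℕ) (x y : Fin N → Fin 2 → ℂ),
    ρ = ∑ k, (pureMat (x k)) ⊗ₖ (pureMat (y k))

lemma inv_sq : invSqrt2 * invSqrt2 = 1 / 2 := by
  have h : (Real.sqrt 2)⁻¹ * (Real.sqrt 2)⁻¹ = 1 / 2 := by
    rw [← mul_inv, Real.mul_self_sqrt (by norm_num)]; norm_num
  unfold invSqrt2
  rw [← Complex.ofReal_mul, h]; norm_num

lemma inv_star : (starRingEnd ℂ) invSqrt2 = invSqrt2 := by
  unfold invSqrt2
  exact Complex.conj_ofReal _

/-- explicit entries of a Bell-diagonal matrix -/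
lemma rho_entries (v : Fin 4 → ℝ) : rhoBD v = Matrix.of fun p q =>
    if p = q then (if p.1 = p.2 then ((v 0 : ℂ) + v 1) / 2 else ((v 2 : ℂ) + v 3) / 2)
    else if p.1 ≠ q.1 ∧ p.2 ≠ q.2 then
      (if p.1 = p.2 then ((v 0 : ℂ) - v 1) / 2 else ((v 2 : ℂ) - v 3) / 2) else 0 := by
  ext ⟨i, j⟩ ⟨k, l⟩
  fin_cases i <;> fin_cases j <;> fin_cases k <;> fin_cases l <;>
    simp [rhoBD, BellProj, bell, vecMulVec, Fin.sum_univ_four, inv_star, inv_sq, Matrix.sum_apply] <;> ring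

/-- cone of matrices reachable by local Kraus operators -/
def R (ρ : M4) : AddSubmonoid M4 :=
  AddSubmonoid.closure {σ | ∃ A B : Matrix (Fin 2) (Fin 2) ℂ, σ = (A ⊗ₖ B) * ρ * (A ⊗ₖ B)ᴴ}

lemma R_to {ρ σ : M4} (h : σ ∈ R ρ) : SLOCCto ρ σ := by
  have : ∃ (N : ℕ) (A B : Fin N → Matrix (Fin 2) (Fin 2) ℂ),
      σ = ∑ k, (A k ⊗ₖ B k) * ρ * (A k ⊗ₖ B k)ᴴ := by
    refine AddSubmonoid.closure_induction ?_ ?_ ?_ h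
    · rintro x ⟨A, B, rfl⟩
      exact ⟨1, fun _ => A, fun _ => B, by simp⟩
    · exact ⟨0, fun _ => 0, fun _ => 0, by simp⟩
    · rintro x y _ _ ⟨N, A, B, rfl⟩ ⟨M, C, D, rfl⟩
      exact ⟨N + M, Fin.append A C, Fin.append B D, by simp [Fin.sum_univ_add]⟩
  obtain ⟨N, A, B, h⟩ := this
  exact ⟨N, A, B, 1, one_pos, by simpa using h⟩

lemma R_self (ρ : M4) : ρ ∈ R ρ :=
  AddSubmonoid.subset_closure ⟨1, 1, by simp⟩

lemma R_step {ρ σ : M4} (h : σ ∈ R ρ) (A B : Matrix (Fin 2) (Fin 2) ℂ) :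
    (A ⊗ₖ B) * σ * (A ⊗ₖ B)ᴴ ∈ R ρ := by
  refine AddSubmonoid.closure_induction ?_ ?_ ?_ h
  · rintro x ⟨C, D, rfl⟩
    refine AddSubmonoid.subset_closure ⟨A * C, B * D, ?_⟩
    rw [Matrix.mul_kronecker_mul, Matrix.conjTranspose_mul]
    simp only [Matrix.mul_assoc]
  · simp
  · intro x y _ _ hx hy
    rw [Matrix.mul_add, Matrix.add_mul]
    exact add_mem hx hy

lemma R_smul {ρ σ : M4} (h : σ ∈ R ρ) (t : ℝ) (ht : 0 ≤ t) : (t : ℂ) • σ ∈ R ρ := by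
  have := R_step h ((Real.sqrt t : ℂ) • 1) 1
  rw [Matrix.smul_kronecker, Matrix.one_kronecker_one, Matrix.conjTranspose_smul] at this
  simp only [Matrix.conjTranspose_one, Matrix.smul_mul, Matrix.mul_smul, one_mul, mul_one, smul_smul,
    Complex.star_def, Complex.conj_ofReal, ← Complex.ofReal_mul, Real.mul_self_sqrt ht] at this
  exact this

lemma rho_add (v w : Fin 4 → ℝ) : rhoBD (v + w) = rhoBD v + rhoBD w := by
  simp [rhoBD, add_smul, Finset.sum_add_distrib]

lemma rho_smul (t : ℝ) (v : Fin 4 → ℝ) : rhoBD (t • v) = (t : ℂ) • rhoBD v := by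
  simp only [rhoBD, Finset.smul_sum, smul_smul, Pi.smul_apply, smul_eq_mul, Complex.ofReal_mul]

lemma kron_conj (A B : Matrix (Fin 2) (Fin 2) ℂ) (ρ : M4) (p q : Q2) :
    ((A ⊗ₖ B) * ρ * (A ⊗ₖ B)ᴴ) p q =
      ∑ k : Fin 2, ∑ l : Fin 2, (∑ i : Fin 2, ∑ j : Fin 2, A p.1 i * B p.2 j * ρ (i, j) (k, l)) *
        (star (A q.1 k) * star (B q.2 l)) := by
  simp only [Matrix.mul_apply, Fintype.sum_prod_type, Matrix.conjTranspose_apply,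
    Matrix.kroneckerMap_apply, star_mul']

lemma swap12 (a b c d : ℝ) :
    ((!![1, 1; 1, -1] : Matrix (Fin 2) (Fin 2) ℂ) ⊗ₖ (!![1, 1; 1, -1] : Matrix (Fin 2) (Fin 2) ℂ)) *
      rhoBD ![a, b, c, d] *
    ((!![1, 1; 1, -1] : Matrix (Fin 2) (Fin 2) ℂ) ⊗ₖ (!![1, 1; 1, -1] : Matrix (Fin 2) (Fin 2) ℂ))ᴴ
      = ((4 : ℝ) : ℂ) • rhoBD ![a, c, b, d] := by
  rw [rho_entries, rho_entries]
  ext ⟨i, j⟩ ⟨k, l⟩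
  rw [kron_conj]
  fin_cases i <;> fin_cases j <;> fin_cases k <;> fin_cases l <;>
    simp [Fin.sum_univ_two] <;> ring

lemma swap23 (a b c d : ℝ) :
    ((!![1, 0; 0, I] : Matrix (Fin 2) (Fin 2) ℂ) ⊗ₖ (!![1, 0; 0, -I] : Matrix (Fin 2) (Fin 2) ℂ)) *
      rhoBD ![a, b, c, d] *
    ((!![1, 0; 0, I] : Matrix (Fin 2) (Fin 2) ℂ) ⊗ₖ (!![1, 0; 0, -I] : Matrix (Fin 2) (Fin 2) ℂ))ᴴ
      = rhoBD ![a, b, d, c] := by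
  rw [rho_entries, rho_entries]
  ext ⟨i, j⟩ ⟨k, l⟩
  rw [kron_conj]
  fin_cases i <;> fin_cases j <;> fin_cases k <;> fin_cases l <;>
    simp [Fin.sum_univ_two] <;> ring_nf <;> simp <;> ring

lemma proj00 (a b c d : ℝ) :
    ((!![1, 0; 0, 0] : Matrix (Fin 2) (Fin 2) ℂ) ⊗ₖ (!![1, 0; 0, 0] : Matrix (Fin 2) (Fin 2) ℂ)) *
      rhoBD ![a, b, c, d] *
    ((!![1, 0; 0, 0] : Matrix (Fin 2) (Fin 2) ℂ) ⊗ₖ (!![1, 0; 0, 0] : Matrix (Fin 2) (Fin 2) ℂ))ᴴ +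
    ((!![0, 0; 1, 0] : Matrix (Fin 2) (Fin 2) ℂ) ⊗ₖ (!![0, 0; 1, 0] : Matrix (Fin 2) (Fin 2) ℂ)) *
      rhoBD ![a, b, c, d] *
    ((!![0, 0; 1, 0] : Matrix (Fin 2) (Fin 2) ℂ) ⊗ₖ (!![0, 0; 1, 0] : Matrix (Fin 2) (Fin 2) ℂ))ᴴ
      = rhoBD ![(a + b) / 2, (a + b) / 2, 0, 0] := by
  rw [rho_entries, rho_entries]
  ext ⟨i, j⟩ ⟨k, l⟩
  rw [Matrix.add_apply, kron_conj, kron_conj]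
  fin_cases i <;> fin_cases j <;> fin_cases k <;> fin_cases l <;>
    simp [Fin.sum_univ_two]

lemma R12 {ρ : M4} {a b c d : ℝ} (h : rhoBD ![a, b, c, d] ∈ R ρ) : rhoBD ![a, c, b, d] ∈ R ρ := by
  have h2 := R_step h !![1, 1; 1, -1] !![1, 1; 1, -1]
  rw [swap12] at h2
  have h3 := R_smul h2 (1 / 4) (by norm_num)
  rw [smul_smul, ← Complex.ofReal_mul] at h3
  norm_num at h3
  exact h3

lemma R23 {ρ : M4} {a b c d : ℝ} (h : rhoBD ![a, b, c, d] ∈ R ρ) : rhoBD ![a, b, d, c] ∈ R ρ := by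
  have h2 := R_step h !![1, 0; 0, I] !![1, 0; 0, -I]
  rwa [swap23] at h2

lemma R_comb {ρ : M4} {v w : Fin 4 → ℝ} (hv : rhoBD v ∈ R ρ) (hw : rhoBD w ∈ R ρ) {s t : ℝ}
    (hs : 0 ≤ s) (ht : 0 ≤ t) : rhoBD (s • v + t • w) ∈ R ρ := by
  rw [rho_add, rho_smul, rho_smul]
  exact add_mem (R_smul hv s hs) (R_smul hw t ht)

lemma exists_mix {p q x : ℝ} (hx : x ≤ p) (hq : q ≤ x) :
    ∃ t : ℝ, 0 ≤ t ∧ t ≤ 1 ∧ t * p + (1 - t) * q = x := by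
  rcases eq_or_lt_of_le (hq.trans hx) with h | h
  · exact ⟨1, by norm_num, le_refl _, by linarith⟩
  · refine ⟨(x - q) / (p - q), div_nonneg (by linarith) (by linarith),
      (div_le_one (by linarith)).2 (by linarith), ?_⟩
    have : p - q ≠ 0 := by linarith
    field_simp
    ring

lemma T12 {ρ : M4} {a b c d x : ℝ} (h : rhoBD ![a, b, c, d] ∈ R ρ) (hx : x ≤ b) (hc : c ≤ x) :
    rhoBD ![a, x, b + c - x, d] ∈ R ρ := by
  obtain ⟨t, h0, h1, rfl⟩ := exists_mix hx hc
  have := R_comb h (R12 h) h0 (sub_nonneg.2 h1)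
  convert this using 2
  ext i; fin_cases i <;> simp <;> ring

lemma T23 {ρ : M4} {a b c d x : ℝ} (h : rhoBD ![a, b, c, d] ∈ R ρ) (hx : x ≤ c) (hc : d ≤ x) :
    rhoBD ![a, b, x, c + d - x] ∈ R ρ := by
  obtain ⟨t, h0, h1, rfl⟩ := exists_mix hx hc
  have := R_comb h (R23 h) h0 (sub_nonneg.2 h1)
  convert this using 2
  ext i; fin_cases i <;> simp <;> ring

/-- weak supermajorization -/
lemma major {ρ : M4} {e a b c x y z : ℝ} (h : rhoBD ![e, a, b, c] ∈ R ρ)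
    (hab : b ≤ a) (hbc : c ≤ b) (hxy : y ≤ x) (hyz : z ≤ y) (h1 : c ≤ z) (h2 : b + c ≤ y + z)
    (h3 : a + b + c ≤ x + y + z) :
    ∃ x' y' z', x' ≤ x ∧ y' ≤ y ∧ z' ≤ z ∧ x' + y' + z' = a + b + c ∧ rhoBD ![e, x', y', z'] ∈ R ρ := by
  rcases le_total a x with hax | hax
  · rcases le_total b y with hby | hby
    · exact ⟨a, b, c, hax, hby, h1, rfl, h⟩
    · exact ⟨a, y, b + c - y, hax, le_refl _, by linarith, by ring, T23 h hby (by linarith)⟩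
  · rcases le_total b x with hbx | hbx
    · have hh := T12 h hax hbx
      rcases le_total (a + b - x) y with hby | hby
      · exact ⟨_, _, _, le_refl _, hby, h1, by ring, hh⟩
      · exact ⟨_, _, _, le_refl _, le_refl _, by linarith, by ring, T23 hh hby (by linarith)⟩
    · have hh := T23 h (x := b + c - z) (by linarith) (by linarith)
      have h4 := T12 hh (x := x) hax (by linarith)
      exact ⟨_, _, _, le_refl _, by linarith, by linarith, by ring, h4⟩


/-- if two entangled ordered Bell-diagonal weight vectors satisfy the
three monotone inequalities `E_i(λ) ≥ E_i(λ')` (in cross-multiplied form), then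
`ρ_BD(λ)` can be transformed to `ρ_BD(λ')` by SLOCC. -/
theorem stmt14 (l l' : Fin 4 → ℝ) (hw : IsWeight l) (hw' : IsWeight l')
    (ho : IsOrdered l) (ho' : IsOrdered l')
    (h1 : 1 / 2 < l 0) (h1' : 1 / 2 < l' 0)
    (hE1 : l' 0 ≤ l 0)
    (hE2 : (1 - 2 * l' 1) * (l 2 + l 3) ≤ (1 - 2 * l 1) * (l' 2 + l' 3))
    (hE3 : (1 - 2 * l' 1 - 2 * l' 2) * l 3 ≤ (1 - 2 * l 1 - 2 * l 2) * l' 3) :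
    SLOCCto (rhoBD l) (rhoBD l') := by
  obtain ⟨hp, hs⟩ := hw
  obtain ⟨hp', hs'⟩ := hw'
  obtain ⟨o1, o2, o3⟩ := ho
  obtain ⟨o1', o2', o3'⟩ := ho'
  rw [Fin.sum_univ_four] at hs hs'
  apply R_to
  have hself : rhoBD ![l 0, l 1, l 2, l 3] ∈ R (rhoBD l) := by
    convert R_self (rhoBD l) using 2
    ext i; fin_cases i <;> rfl
  have e1 : rhoBD ![1, 1, 0, 0] ∈ R (rhoBD l) := by
    have h := add_mem (R_step hself !![1, 0; 0, 0] !![1, 0; 0, 0])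
      (R_step hself !![0, 0; 1, 0] !![0, 0; 1, 0])
    rw [proj00] at h
    have hpos : 0 < (l 0 + l 1) / 2 := by linarith [hp 1]
    have hne : l 0 + l 1 ≠ 0 := by linarith
    have h2 := R_smul h ((l 0 + l 1) / 2)⁻¹ (by positivity)
    rw [← rho_smul] at h2
    convert h2 using 2
    ext i; fin_cases i <;> simp <;> field_simp
  have e2 := R12 e1
  have e3 := R23 e2
  set d := 2 * l 0 - 1 with hd
  have hdpos : 0 < d := by linarith
  set p := (2 * l' 0 - 1) / d with hpdef
  have hpd : p * d = 2 * l' 0 - 1 := div_mul_cancel₀ _ hdpos.ne'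
  have hppos : 0 < p := div_pos (by linarith) hdpos
  have hp1 : p ≤ 1 := (div_le_one hdpos).2 (by linarith)
  have k1 : p * l 3 ≤ l' 3 := by
    have : (2 * l' 0 - 1) * l 3 ≤ d * l' 3 := by
      have a1 : 1 - 2 * l 1 - 2 * l 2 = d + 2 * l 3 := by linarith
      have a2 : 1 - 2 * l' 1 - 2 * l' 2 = (2 * l' 0 - 1) + 2 * l' 3 := by linarith
      rw [a1, a2] at hE3; nlinarith
    rw [← hpd] at this
    exact le_of_mul_le_mul_left (by linarith) hdpos
  have k2 : p * (l 2 + l 3) ≤ l' 2 + l' 3 := by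
    have : (2 * l' 0 - 1) * (l 2 + l 3) ≤ d * (l' 2 + l' 3) := by
      have a1 : 1 - 2 * l 1 = d + 2 * (l 2 + l 3) := by linarith
      have a2 : 1 - 2 * l' 1 = (2 * l' 0 - 1) + 2 * (l' 2 + l' 3) := by linarith
      rw [a1, a2] at hE2; nlinarith
    rw [← hpd] at this
    exact le_of_mul_le_mul_left (by linarith) hdpos
  have hscaled : rhoBD ![p * l 0, p * l 1, p * l 2, p * l 3] ∈ R (rhoBD l) := by
    have h := R_smul hself p hppos.le
    rw [← rho_smul] at h
    convert h using 2
    ext i; fin_cases i <;> simp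
  have hsum : p * l 0 + p * l 1 + p * l 2 + p * l 3 = p := by
    rw [← mul_add, ← mul_add, ← mul_add, hs, mul_one]
  have hp0 : 2 * (p * l 0) - p = 2 * l' 0 - 1 := by rw [← hpd, hd]; ring
  obtain ⟨x, y, z, hx, hy, hz, hxyz, hR⟩ := major hscaled (x := l' 1) (y := l' 2) (z := l' 3)
    (mul_le_mul_of_nonneg_left o2 hppos.le) (mul_le_mul_of_nonneg_left o3 hppos.le) o2' o3' k1
    (by linarith) (by linarith)
  have f := R_comb (R_comb hR e1 zero_le_one (sub_nonneg.2 hx))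
    (R_comb e2 e3 (sub_nonneg.2 hy) (sub_nonneg.2 hz)) zero_le_one zero_le_one
  convert f using 2
  ext i; fin_cases i <;> simp <;> linarith

end Paper
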